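/- For all 1 ≤ j < k ≤ n and every x ∈ U ∩ S^n, D_{e_k(x)} e_j(x) = (x_{j−1} / √(s_{j−1}(x) s_j(x))) · e_k(x). (This identifies the only nonvanishing Christoffel symbols of S^n in this frame: Γ^k_{kj} = −Γ^j_{kk} = x_{j−1}/√(s_{j−1} s_j) for j < k.) -/

import Mathlib

open scoped InnerProductSpace BigOperators

noncomputable section

/-- `s_j(x) = ∑_{r=j}^n x_r²`. -/
def sfun (n j : ℕ) (x : EuclideanSpace ℝ (Fin (n + 1))) : ℝ :=
  ∑ r : Fin (n + 1), if j ≤ (r : ℕ) then x r ^ 2 else 0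

/-- The `j`-th coordinate of `x` (read as a natural-number index, `0` out of range). -/
def coordfun (n : ℕ) (x : EuclideanSpace ℝ (Fin (n + 1))) (j : ℕ) : ℝ :=
  if h : j < n + 1 then x ⟨j, h⟩ else 0

/-- The vector field `e_j(x) = √(s_j/s_{j-1}) ( −∂_{j−1} + (x_{j−1}/s_j) Σ_{r=j}^n x_r ∂_r )`. -/
def efun (n j : ℕ) (x : EuclideanSpace ℝ (Fin (n + 1))) : EuclideanSpace ℝ (Fin (n + 1)) :=
  WithLp.toLp 2 fun r => Real.sqrt (sfun n j x / sfun n (j - 1) x) *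
    (-(if (r : ℕ) = j - 1 then 1 else 0)
      + coordfun n x (j - 1) / sfun n j x * (if j ≤ (r : ℕ) then x r else 0))

/-- `U = {x ∈ ℝ^{n+1} : x_n > 0}`. -/
def Usph (n : ℕ) : Set (EuclideanSpace ℝ (Fin (n + 1))) := {x | 0 < coordfun n x n}

/-- The unit sphere `S^n ⊂ ℝ^{n+1}`. -/
def sph (n : ℕ) : Set (EuclideanSpace ℝ (Fin (n + 1))) :=
  {x | ∑ r : Fin (n + 1), x r ^ 2 = 1}

/-!
Write `e_j = a P_j x - b ∂_{j-1}`, where `P_j` is the projection onto the coordinates of index at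
least `j` and the coefficients `a`, `b` are functions of `x_{j-1}`, `s_{j-1}` and `s_j` alone.
For `j < k` the vector `e_k(x)` has no component of index below `j` and is orthogonal to `x`, so
`x_{j-1}`, `s_{j-1}` and `s_j` are constant to first order along it. Only the linear factor `P_j x`
contributes to the derivative, and `P_j` fixes `e_k(x)`; hence `D_{e_k} e_j = a e_k`.
-/

/- At `a = 0` or `b = 0` both sides of these two identities are `0`, by the convention `c / 0 = 0`;
hence the formula for `efun` in terms of `tailProj` needs no positivity. -/
lemma div_sqrt_mul_self {a b : ℝ} (ha : 0 ≤ a) : a / √(b * a) = √(a / b) := by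
  rw [Real.sqrt_mul' _ ha, Real.sqrt_div ha, mul_comm, ← div_div, Real.div_sqrt]

lemma sqrt_div_mul_div {a b : ℝ} (ha : 0 ≤ a) (c : ℝ) : √(a / b) * (c / a) = c / √(b * a) := by
  rcases ha.eq_or_lt with rfl | ha
  · simp
  · rw [← div_sqrt_mul_self ha.le, div_mul_div_comm, mul_comm, mul_div_mul_right _ _ ha.ne']

lemma fderiv_comp_smul_sub_smul_const_apply {E F G : Type*}
    [NormedAddCommGroup E] [NormedSpace ℝ E] [NormedAddCommGroup F] [NormedSpace ℝ F]
    [NormedAddCommGroup G] [NormedSpace ℝ G] {f : E → F} {a b : F → ℝ} {x v : E}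
    (hf : DifferentiableAt ℝ f x) (ha : DifferentiableAt ℝ a (f x))
    (hb : DifferentiableAt ℝ b (f x)) (hv : fderiv ℝ f x v = 0) (L : E →L[ℝ] G) (w : G) :
    fderiv ℝ (fun y => a (f y) • L y - b (f y) • w) x v = a (f x) • L v := by
  have h := ((ha.hasFDerivAt.comp x hf.hasFDerivAt).smul L.hasFDerivAt).sub
    ((hb.hasFDerivAt.comp x hf.hasFDerivAt).smul_const w)
  refine (congrArg (· v) h.fderiv).trans ?_
  simp [hv]

section

variable {n : ℕ} (j : ℕ) (i : Fin (n + 1)) (x y : EuclideanSpace ℝ (Fin (n + 1)))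

/-- The orthogonal projection `x ↦ Σ_{r=j}^n x_r ∂_r` of `ℝ^{n+1}` onto its last coordinates; it is
`0` for `n < j`. -/
def tailProj (n j : ℕ) : EuclideanSpace ℝ (Fin (n + 1)) →L[ℝ] EuclideanSpace ℝ (Fin (n + 1)) :=
  LinearMap.toContinuousLinearMap
    { toFun := fun x => WithLp.toLp 2 fun r => if j ≤ (r : ℕ) then x r else 0
      map_add' := fun x y => by ext r; simp [ite_add_ite]
      map_smul' := fun c x => by ext r; simp }

lemma tailProj_apply : tailProj n j x i = if j ≤ (i : ℕ) then x i else 0 :=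
  rfl

lemma tailProj_tailProj_of_le {j k : ℕ} (hjk : j ≤ k) :
    tailProj n j (tailProj n k x) = tailProj n k x := by
  ext r
  simp only [tailProj_apply]
  split_ifs <;> first | rfl | omega

lemma tailProj_single (c : ℝ) :
    tailProj n i (EuclideanSpace.single i c) = EuclideanSpace.single i c := by
  ext r
  by_cases hr : r = i <;> simp [tailProj_apply, hr]

lemma inner_tailProj_left : ⟪tailProj n j x, y⟫_ℝ = ⟪x, tailProj n j y⟫_ℝ := by
  simp [PiLp.inner_apply, tailProj_apply]

lemma sfun_eq_norm_tailProj_sq : sfun n j x = ‖tailProj n j x‖ ^ 2 := by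
  simp [EuclideanSpace.real_norm_sq_eq, tailProj_apply, sfun]

lemma sfun_eq_inner_tailProj : sfun n j x = ⟪x, tailProj n j x⟫_ℝ := by
  rw [sfun_eq_norm_tailProj_sq, ← real_inner_self_eq_norm_sq, inner_tailProj_left,
    tailProj_tailProj_of_le _ le_rfl]

lemma sfun_nonneg : 0 ≤ sfun n j x := by
  rw [sfun_eq_norm_tailProj_sq]
  positivity

lemma sfun_antitone : Antitone fun j => sfun n j x := by
  intro i j hij
  refine Finset.sum_le_sum fun r _ => ?_
  split_ifs <;> first | omega | exact le_rfl | positivity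

lemma le_of_sfun_pos {j : ℕ} {x : EuclideanSpace ℝ (Fin (n + 1))} (hx : 0 < sfun n j x) :
    j ≤ n := by
  by_contra! hj
  have hzero : sfun n j x = 0 := Finset.sum_eq_zero fun r _ => if_neg (by omega)
  exact hx.ne' hzero

lemma sfun_pos_of_mem_Usph {j : ℕ} {x : EuclideanSpace ℝ (Fin (n + 1))} (hj : j ≤ n)
    (hx : x ∈ Usph n) : 0 < sfun n j x := by
  have hlast : 0 < x (Fin.last n) := by simpa [Usph, coordfun, Fin.last] using hx
  have hsn : sfun n n x = x (Fin.last n) ^ 2 := by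
    simp [sfun, Fin.sum_univ_castSucc, Nat.not_le_of_lt]
  calc 0 < sfun n n x := hsn ▸ pow_pos hlast 2
    _ ≤ sfun n j x := sfun_antitone x hj

lemma hasFDerivAt_sfun : HasFDerivAt (sfun n j) (2 • innerSL ℝ (tailProj n j x)) x := by
  have h := (tailProj n j).hasFDerivAt (x := x) |>.norm_sq
  rw [← funext (sfun_eq_norm_tailProj_sq j)] at h
  refine h.congr_fderiv ?_
  ext v
  simp [← inner_tailProj_left, tailProj_tailProj_of_le _ le_rfl]

lemma coordfun_val : coordfun n x i = x i :=
  dif_pos i.isLt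

lemma efun_succ :
    efun n (i + 1) x = (x i / √(sfun n i x * sfun n (i + 1) x)) • tailProj n (i + 1) x
        - √(sfun n (i + 1) x / sfun n i x) • EuclideanSpace.single i 1 := by
  ext r
  simp only [← sqrt_div_mul_div (sfun_nonneg _ x), efun, Nat.add_sub_cancel, coordfun_val,
    PiLp.sub_apply, PiLp.smul_apply, smul_eq_mul, tailProj_apply, PiLp.single_apply, Fin.ext_iff]
  ring

lemma tailProj_efun_succ : tailProj n i (efun n (i + 1) x) = efun n (i + 1) x := by
  simp only [efun_succ, map_sub, map_smul, tailProj_single,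
    tailProj_tailProj_of_le _ (Nat.le_succ (i : ℕ))]

lemma inner_efun_succ : ⟪x, efun n (i + 1) x⟫_ℝ = 0 := by
  rw [efun_succ, inner_sub_right, inner_smul_right, inner_smul_right, ← sfun_eq_inner_tailProj,
    EuclideanSpace.inner_single_right, div_mul_comm, div_sqrt_mul_self (sfun_nonneg _ x)]
  simp

lemma fderiv_efun_succ_apply_of_inner_eq_zero {i : Fin (n + 1)}
    {x v : EuclideanSpace ℝ (Fin (n + 1))}
    (hx : 0 < sfun n (i + 1) x) (hv : tailProj n (i + 1) v = v) (hxv : ⟪x, v⟫_ℝ = 0) :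
    fderiv ℝ (efun n (i + 1)) x v = (x i / √(sfun n i x * sfun n (i + 1) x)) • v := by
  have hx' : 0 < sfun n i x := hx.trans_le (sfun_antitone x (Nat.le_succ _))
  have hf : HasFDerivAt (fun y => (y i, sfun n i y, sfun n (i + 1) y)) _ x :=
    (EuclideanSpace.proj (𝕜 := ℝ) i).hasFDerivAt.prodMk
      ((hasFDerivAt_sfun i x).prodMk (hasFDerivAt_sfun (i + 1) x))
  have hvi : v i = 0 := by rw [← hv, tailProj_apply, if_neg (by omega)]
  have hv' : tailProj n i v = v := by rw [← hv, tailProj_tailProj_of_le _ (Nat.le_succ _)]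
  have hfv : fderiv ℝ (fun y => (y i, sfun n i y, sfun n (i + 1) y)) x v = 0 := by
    rw [hf.fderiv]
    simp [hvi, inner_tailProj_left, hv, hv', hxv]
  have ha : DifferentiableAt ℝ (fun p : ℝ × ℝ × ℝ => p.1 / √(p.2.1 * p.2.2))
      (x i, sfun n i x, sfun n (i + 1) x) := by
    have hmul := mul_pos hx' hx
    have hsqrt := Real.sqrt_pos.2 hmul
    fun_prop (disch := first | exact hmul.ne' | exact hsqrt.ne')
  have hb : DifferentiableAt ℝ (fun p : ℝ × ℝ × ℝ => √(p.2.2 / p.2.1))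
      (x i, sfun n i x, sfun n (i + 1) x) := by
    have hdiv := div_pos hx hx'
    fun_prop (disch := first | exact hdiv.ne' | exact hx'.ne')
  rw [funext (efun_succ i), fderiv_comp_smul_sub_smul_const_apply hf.differentiableAt ha hb hfv
    (tailProj n (i + 1)), hv]

end

theorem statement4_general (n j k : ℕ) (hj : 1 ≤ j) (hjk : j < k)
    (x : EuclideanSpace ℝ (Fin (n + 1))) (hx : 0 < sfun n k x) :
    fderiv ℝ (efun n j) x (efun n k x)
      = (coordfun n x (j - 1) / √(sfun n (j - 1) x * sfun n j x)) • efun n k x := by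
  have hk : k ≤ n := le_of_sfun_pos hx
  obtain ⟨i, rfl⟩ : ∃ i : Fin (n + 1), (i : ℕ) + 1 = j :=
    ⟨⟨j - 1, by omega⟩, Nat.sub_add_cancel hj⟩
  obtain ⟨l, rfl⟩ : ∃ l : Fin (n + 1), (l : ℕ) + 1 = k :=
    ⟨⟨k - 1, by omega⟩, Nat.sub_add_cancel (by omega)⟩
  have hv : tailProj n (i + 1) (efun n (l + 1) x) = efun n (l + 1) x := by
    rw [← tailProj_efun_succ, tailProj_tailProj_of_le _ (by omega)]
  have hsi : 0 < sfun n (i + 1) x := hx.trans_le (sfun_antitone x hjk.le)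
  simpa [coordfun_val] using fderiv_efun_succ_apply_of_inner_eq_zero hsi hv (inner_efun_succ l x)

/-- For `1 ≤ j < k ≤ n` and `x ∈ U ∩ S^n`,
`D_{e_k(x)} e_j(x) = (x_{j−1} / √(s_{j−1}(x) s_j(x))) · e_k(x)`. -/
theorem statement4 (n j k : ℕ) (hj : 1 ≤ j) (hjk : j < k) (hk : k ≤ n)
    (x : EuclideanSpace ℝ (Fin (n + 1))) (hxU : x ∈ Usph n) (hxS : x ∈ sph n) :
    fderiv ℝ (efun n j) x (efun n k x)
      = (coordfun n x (j - 1) / Real.sqrt (sfun n (j - 1) x * sfun n j x)) • efun n k x :=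
  statement4_general n j k hj hjk x (sfun_pos_of_mem_Usph hk hxU)
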